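/- Integration by parts for the mixed operator X^{xa}: let x : [0,T] → ℝ be continuously differentiable and let φ, ψ be Schwartz functions on ℝ^n. For 0 ≤ u ≤ t ≤ T and a bounded continuous function χ ∈ L^p(ℝ^n), write X^x_{tu} χ = ∫_u^t x'(v) (g_{t−v} * χ) dv (with g_0 * χ = χ). Then for all 0 ≤ s ≤ t ≤ T the following equality holds in L^p(ℝ^n): ∫_s^t x'(u) ( g_{t−u} * [ ((g_{u−s} * φ) − φ) · ψ ] ) du = ∫_s^t X^x_{tu}( ((∂g_{u−s}) * φ) · ψ ) du, where · denotes the pointwise product of functions on ℝ^n, the inner integrand on the right is taken for u ∈ (s,t), and all integrals are absolutely convergent Bochner integrals in L^p(ℝ^n). -/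

import Mathlib

open MeasureTheory Real
open scoped ENNReal

/-- The heat kernel on ℝ^n: `g_t(ξ) = (2πt)^(-n/2) exp(-|ξ|²/(2t))`. -/
noncomputable def heatKernel (n : ℕ) (t : ℝ) : EuclideanSpace ℝ (Fin n) → ℝ :=
  fun ξ => (2 * π * t) ^ (-(n : ℝ) / 2) * Real.exp (-‖ξ‖ ^ 2 / (2 * t))

/-- Time derivative of the heat kernel:
`∂g_t(ξ) = (2πt)^(-n/2) e^{-|ξ|²/(2t)} (|ξ|²/(2t²) - n/(2t))`. -/
noncomputable def heatKernelDt (n : ℕ) (t : ℝ) : EuclideanSpace ℝ (Fin n) → ℝ :=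
  fun ξ => (2 * π * t) ^ (-(n : ℝ) / 2) * Real.exp (-‖ξ‖ ^ 2 / (2 * t)) *
    (‖ξ‖ ^ 2 / (2 * t ^ 2) - (n : ℝ) / (2 * t))

/-- Convolution of two real functions on ℝ^n. -/
noncomputable def convol {n : ℕ} (f g : EuclideanSpace ℝ (Fin n) → ℝ) :
    EuclideanSpace ℝ (Fin n) → ℝ :=
  fun ξ => ∫ η, f η * g (ξ - η)

/-- Heat semigroup at the level of functions: `S_t φ = g_t * φ` for `t > 0`,
`S_0 = Id` (also for `t ≤ 0`). -/
noncomputable def heatS (n : ℕ) (t : ℝ) (φ : EuclideanSpace ℝ (Fin n) → ℝ) :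
    EuclideanSpace ℝ (Fin n) → ℝ :=
  if 0 < t then convol (heatKernel n t) φ else φ

/-!
Integrating the heat equation in time gives `g_{v-s} * φ - φ = ∫_s^v ∂g_{u-s} * φ du`. The
integrand is integrable at `u = s` because `∂g_r` has mean zero: for `L`-Lipschitz `φ` this yields
`|∂g_r * φ| ≤ L ∫ |∂g_r(y)| |y| dy ≤ C r^{-1/2}`. Inserting this representation on the left-hand
side produces a double integral over the triangle `s < u < v < t`, and Fubini turns it into the
right-hand side. Finiteness in `L^p` follows from Minkowski's integral inequality and
`‖g_r‖_{L^1} = 1`.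
-/

open Set Filter Topology

section IntegralInequalities

variable {α β : Type*} [MeasurableSpace α] [MeasurableSpace β] {μ : Measure α} {ν : Measure β}
  {p M : ℝ≥0∞}

theorem lintegral_rpow_le [IsFiniteMeasure μ] {f : α → ℝ≥0∞} (hf : Measurable f) {q : ℝ}
    (hq : 1 ≤ q) : (∫⁻ a, f a ∂μ) ^ q ≤ μ univ ^ (q - 1) * ∫⁻ a, f a ^ q ∂μ := by
  have hq0 : 0 < q := one_pos.trans_le hq
  have h := eLpNorm_le_eLpNorm_mul_rpow_measure_univ (μ := μ) (ENNReal.one_le_ofReal.2 hq)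
    hf.aestronglyMeasurable
  rw [eLpNorm_one_eq_lintegral_enorm, eLpNorm_eq_lintegral_rpow_enorm_toReal
    (ENNReal.ofReal_pos.2 hq0).ne' ENNReal.ofReal_ne_top, ENNReal.toReal_ofReal hq0.le] at h
  simp only [enorm_eq_self, ENNReal.toReal_one, div_one] at h
  refine (ENNReal.rpow_le_rpow h hq0.le).trans_eq ?_
  rw [ENNReal.mul_rpow_of_nonneg _ _ hq0.le, ← ENNReal.rpow_mul, ← ENNReal.rpow_mul,
    one_div_mul_cancel hq0.ne', ENNReal.rpow_one, sub_mul, one_mul, one_div_mul_cancel hq0.ne',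
    mul_comm]

theorem lintegral_lintegral_rpow_le [IsFiniteMeasure μ] [SFinite ν] {F : α → β → ℝ≥0∞}
    (hF : Measurable (Function.uncurry F)) {q : ℝ} (hq : 1 ≤ q)
    (hM : ∀ᵐ a ∂μ, ∫⁻ b, F a b ^ q ∂ν ≤ M ^ q) :
    ∫⁻ b, (∫⁻ a, F a b ∂μ) ^ q ∂ν ≤ (μ univ * M) ^ q := by
  have hq0 : 0 ≤ q := zero_le_one.trans hq
  calc ∫⁻ b, (∫⁻ a, F a b ∂μ) ^ q ∂ν
      ≤ ∫⁻ b, μ univ ^ (q - 1) * ∫⁻ a, F a b ^ q ∂μ ∂ν :=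
        lintegral_mono fun b => lintegral_rpow_le hF.of_uncurry_right hq
    _ = μ univ ^ (q - 1) * ∫⁻ a, ∫⁻ b, F a b ^ q ∂ν ∂μ := by
        rw [lintegral_const_mul' _ _ (ENNReal.rpow_ne_top_of_nonneg (sub_nonneg.2 hq)
          (measure_ne_top μ univ)), lintegral_lintegral_swap
            ((hF.comp measurable_swap).pow_const q).aemeasurable]
    _ ≤ μ univ ^ (q - 1) * (M ^ q * μ univ) := by
        gcongr
        exact (lintegral_mono_ae hM).trans_eq (lintegral_const _)
    _ = (μ univ * M) ^ q := by
        rw [ENNReal.mul_rpow_of_nonneg _ _ hq0, mul_left_comm, mul_comm (M ^ q)]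
        nth_rw 2 [← ENNReal.rpow_one (μ univ)]
        rw [← ENNReal.rpow_add_of_nonneg _ _ (sub_nonneg.2 hq) zero_le_one, sub_add_cancel]

theorem eLpNorm_lintegral_le [IsFiniteMeasure μ] [SFinite ν] {F : α → β → ℝ≥0∞}
    (hF : Measurable (Function.uncurry F)) (hp : 1 ≤ p) (hM : ∀ᵐ a ∂μ, eLpNorm (F a) p ν ≤ M) :
    eLpNorm (fun b => ∫⁻ a, F a b ∂μ) p ν ≤ μ univ * M := by
  rcases eq_or_ne p ⊤ with rfl | hp_top
  · simp only [eLpNorm_exponent_top] at hM ⊢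
    have hae : ∀ᵐ b ∂ν, ∀ᵐ a ∂μ, F a b ≤ M :=
      (Measure.ae_ae_comm (p := fun a b => F a b ≤ M) (measurableSet_le hF measurable_const)).1
        (hM.mono fun a ha => (enorm_ae_le_eLpNormEssSup (F a) ν).mono fun b hb => hb.trans ha)
    refine eLpNormEssSup_le_of_ae_enorm_bound (hae.mono fun b hb => ?_)
    rw [enorm_eq_self, mul_comm, ← lintegral_const]
    exact lintegral_mono_ae hb
  · have hp0 : p ≠ 0 := (one_pos.trans_le hp).ne'
    have hq : 1 ≤ p.toReal := by simpa using ENNReal.toReal_mono hp_top hp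
    simp only [eLpNorm_eq_lintegral_rpow_enorm_toReal hp0 hp_top, enorm_eq_self, one_div,
      ENNReal.rpow_inv_le_iff (one_pos.trans_le hq)] at hM ⊢
    exact lintegral_lintegral_rpow_le hF hq hM

theorem eLpNorm_integral_mul_le [SFinite ν] {k : α → ℝ} (hk : Integrable k μ) {F : α → β → ℝ}
    (hF : Measurable (Function.uncurry F)) (hp : 1 ≤ p) (hM : ∀ᵐ a ∂μ, eLpNorm (F a) p ν ≤ M) :
    eLpNorm (fun b => ∫ a, k a * F a b ∂μ) p ν ≤ (∫⁻ a, ‖k a‖ₑ ∂μ) * M := by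
  -- Minkowski's inequality for the finite measure `|k| μ`
  have hk_enorm : AEMeasurable (fun a => ‖k a‖ₑ) μ := hk.aemeasurable.enorm
  have : IsFiniteMeasure (μ.withDensity fun a => ‖k a‖ₑ) := isFiniteMeasure_withDensity hk.2.ne
  have hpointwise : ∀ b, ‖∫ a, k a * F a b ∂μ‖ₑ ≤
      ∫⁻ a, ‖F a b‖ₑ ∂μ.withDensity fun a => ‖k a‖ₑ := fun b => by
    refine (enorm_integral_le_lintegral_enorm _).trans_eq ?_
    rw [lintegral_withDensity_eq_lintegral_mul₀ hk_enorm hF.of_uncurry_right.enorm.aemeasurable]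
    simp only [enorm_mul, Pi.mul_apply]
  calc eLpNorm (fun b => ∫ a, k a * F a b ∂μ) p ν
      ≤ eLpNorm (fun b => ∫⁻ a, ‖F a b‖ₑ ∂μ.withDensity fun a => ‖k a‖ₑ) p ν :=
        eLpNorm_mono_enorm hpointwise
    _ ≤ (μ.withDensity fun a => ‖k a‖ₑ) univ * M :=
        eLpNorm_lintegral_le hF.enorm hp
          ((withDensity_absolutelyContinuous μ _).ae_le
            (hM.mono fun a ha => (eLpNorm_enorm (F a)).trans_le ha))
    _ = (∫⁻ a, ‖k a‖ₑ ∂μ) * M := by rw [withDensity_apply _ MeasurableSet.univ, setLIntegral_univ]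

theorem lintegral_eLpNorm_lt_top_of_abs_le {H : α → β → ℝ} {c : α → ℝ}
    (hc : Integrable c μ) {ψ : β → ℝ} (hψ : MemLp ψ p ν)
    (hH : ∀ᵐ a ∂μ, ∀ b, |H a b| ≤ c a * |ψ b|) :
    ∫⁻ a, eLpNorm (H a) p ν ∂μ < ⊤ := by
  calc ∫⁻ a, eLpNorm (H a) p ν ∂μ ≤ ∫⁻ a, ENNReal.ofReal (c a) * eLpNorm ψ p ν ∂μ :=
        lintegral_mono_ae (hH.mono fun a ha =>
          eLpNorm_le_mul_eLpNorm_of_ae_le_mul (ae_of_all _ ha) p)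
    _ = (∫⁻ a, ENNReal.ofReal (c a) ∂μ) * eLpNorm ψ p ν :=
        lintegral_mul_const' _ _ hψ.eLpNorm_ne_top
    _ < ⊤ := ENNReal.mul_lt_top hc.lintegral_lt_top hψ.eLpNorm_lt_top

theorem intervalIntegral_triangle_swap {E : Type*} [NormedAddCommGroup E] [NormedSpace ℝ E]
    {s t : ℝ} (hst : s ≤ t) {F : ℝ → ℝ → E}
    (hF : Integrable (Function.uncurry F)
      ((volume.restrict (Ioc s t)).prod (volume.restrict (Ioc s t)))) :
    ∫ v in s..t, ∫ u in s..v, F v u = ∫ u in s..t, ∫ v in u..t, F v u := by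
  let below (v u : ℝ) : E := (Iic v).indicator (F v) u
  have hbelow : Integrable (Function.uncurry below)
      ((volume.restrict (Ioc s t)).prod (volume.restrict (Ioc s t))) :=
    hF.indicator (measurableSet_le measurable_snd measurable_fst)
  have hleft : ∀ v ∈ Ioc s t, ∫ u in s..v, F v u = ∫ u in Ioc s t, below v u := fun v hv => by
    rw [setIntegral_indicator measurableSet_Iic, Ioc_inter_Iic, inf_eq_right.2 hv.2,
      intervalIntegral.integral_of_le hv.1.le]
  have hright : ∀ u ∈ Ioc s t, ∫ v in u..t, F v u = ∫ v in Ioc s t, below v u := fun u hu => by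
    have : (below · u) = (Ici u).indicator (F · u) := by
      ext v
      simp only [below, indicator_apply, mem_Iic, mem_Ici]
    rw [this, setIntegral_indicator measurableSet_Ici,
      ← setIntegral_congr_set ((ae_eq_refl (Ioc s t)).inter Ioi_ae_eq_Ici), Ioc_inter_Ioi,
      sup_eq_right.2 hu.1.le, intervalIntegral.integral_of_le hu.2]
  rw [intervalIntegral.integral_of_le hst, intervalIntegral.integral_of_le hst,
    setIntegral_congr_fun measurableSet_Ioc hleft, setIntegral_congr_fun measurableSet_Ioc hright]
  exact integral_integral_swap hbelow

end IntegralInequalities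

theorem integrable_norm_pow_mul_exp_neg_mul_sq_norm {V : Type*} [NormedAddCommGroup V]
    [NormedSpace ℝ V] [FiniteDimensional ℝ V] [MeasurableSpace V] [BorelSpace V] (μ : Measure V)
    [μ.IsAddHaarMeasure] (k : ℕ) {b : ℝ} (hb : 0 < b) :
    Integrable (fun y : V => ‖y‖ ^ k * Real.exp (-b * ‖y‖ ^ 2)) μ := by
  cases subsingleton_or_nontrivial V
  · exact .of_finite
  refine (integrable_fun_norm_addHaar μ (f := fun z : ℝ => z ^ k * Real.exp (-b * z ^ 2))).2 ?_
  refine (integrableOn_rpow_mul_exp_neg_mul_sq (s := ((Module.finrank ℝ V - 1 + k : ℕ) : ℝ)) hb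
    (neg_one_lt_zero.trans_le (Nat.cast_nonneg _))).congr_fun (fun z _ => ?_) measurableSet_Ioi
  simp only [smul_eq_mul, rpow_natCast, pow_add, mul_assoc]

section HeatKernel

variable {n : ℕ} {r : ℝ}

theorem heatKernel_nonneg (hr : 0 ≤ r) (y : EuclideanSpace ℝ (Fin n)) : 0 ≤ heatKernel n r y := by
  unfold heatKernel
  positivity

theorem measurable_heatKernel : Measurable (Function.uncurry (heatKernel n)) := by
  unfold heatKernel Function.uncurry
  fun_prop

theorem measurable_heatKernelDt : Measurable (Function.uncurry (heatKernelDt n)) := by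
  unfold heatKernelDt Function.uncurry
  fun_prop

theorem integrable_heatKernel_mul_norm_pow (hr : 0 < r) (k : ℕ) :
    Integrable fun y => heatKernel n r y * ‖y‖ ^ k := by
  refine ((integrable_norm_pow_mul_exp_neg_mul_sq_norm volume k (b := (2 * r)⁻¹)
    (by positivity)).const_mul ((2 * π * r) ^ (-(n : ℝ) / 2))).congr (ae_of_all _ fun y => ?_)
  simp only [heatKernel, neg_mul, neg_div, inv_mul_eq_div]
  ring

theorem integrable_heatKernel_mul_eval_norm (hr : 0 < r) (P : Polynomial ℝ) :
    Integrable fun y => heatKernel n r y * P.eval ‖y‖ := by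
  simp only [Polynomial.eval_eq_sum_range, Finset.mul_sum, mul_left_comm _ (P.coeff _)]
  exact integrable_finsetSum _ fun k _ => (integrable_heatKernel_mul_norm_pow hr k).const_mul _

theorem integrable_heatKernel (hr : 0 < r) : Integrable (heatKernel n r) := by
  simpa using integrable_heatKernel_mul_norm_pow (n := n) hr 0

theorem integral_heatKernel (hr : 0 < r) : ∫ y, heatKernel n r y = 1 := by
  have hgauss := GaussianFourier.integral_rexp_neg_mul_sq_norm (V := EuclideanSpace ℝ (Fin n))
    (b := (2 * r)⁻¹) (by positivity)
  have hexp : ∀ y : EuclideanSpace ℝ (Fin n), -‖y‖ ^ 2 / (2 * r) = -(2 * r)⁻¹ * ‖y‖ ^ 2 :=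
    fun y => by ring
  simp only [heatKernel, integral_const_mul, hexp, hgauss, finrank_euclideanSpace_fin]
  rw [show π / (2 * r)⁻¹ = 2 * π * r by field_simp, ← rpow_add (by positivity), neg_div,
    neg_add_cancel, rpow_zero]

theorem heatKernel_sqrt_smul (hr : 0 < r) (y : EuclideanSpace ℝ (Fin n)) :
    heatKernel n r (√r • y) = (√r ^ n)⁻¹ * heatKernel n 1 y := by
  have hnorm : ‖√r • y‖ ^ 2 = r * ‖y‖ ^ 2 := by
    rw [norm_smul, mul_pow, norm_eq_abs, sq_abs, sq_sqrt hr.le]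
  have hfactor : (2 * π * r) ^ (-(n : ℝ) / 2) = (√r ^ n)⁻¹ * (2 * π * 1) ^ (-(n : ℝ) / 2) := by
    rw [mul_one, mul_rpow (by positivity) hr.le, mul_comm, sqrt_eq_rpow, ← rpow_natCast,
      ← rpow_mul hr.le, ← rpow_neg hr.le]
    congr 2
    ring
  simp only [heatKernel, hnorm, hfactor]
  field_simp

/-- The `k`-th absolute moment of the standard Gaussian `g_1` on `ℝ^n`. -/
noncomputable def heatMoment (n k : ℕ) : ℝ :=
  ∫ y, heatKernel n 1 y * ‖y‖ ^ k

theorem heatMoment_nonneg (n k : ℕ) : 0 ≤ heatMoment n k :=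
  integral_nonneg fun y => mul_nonneg (heatKernel_nonneg zero_le_one y) (by positivity)

theorem integral_heatKernel_mul_norm_pow (hr : 0 < r) (k : ℕ) :
    ∫ y, heatKernel n r y * ‖y‖ ^ k = √r ^ k * heatMoment n k := by
  have hpos : 0 < (√r ^ n)⁻¹ := by positivity
  have h := Measure.integral_comp_smul volume (fun y => heatKernel n r y * ‖y‖ ^ k) (√r)
  simp only [heatKernel_sqrt_smul hr, norm_smul, norm_of_nonneg (sqrt_nonneg r), mul_pow,
    finrank_euclideanSpace_fin, mul_assoc, mul_left_comm _ (√r ^ k), integral_const_mul,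
    smul_eq_mul, abs_of_pos hpos] at h
  exact mul_left_cancel₀ hpos.ne' (h.symm.trans (mul_left_comm _ _ _))

theorem hasDerivAt_heatKernel (hr : 0 < r) (y : EuclideanSpace ℝ (Fin n)) :
    HasDerivAt (fun r => heatKernel n r y) (heatKernelDt n r y) r := by
  have hfactor := ((hasDerivAt_id r).const_mul (2 * π)).rpow_const (p := -(n : ℝ) / 2)
    (Or.inl (by simp only [id]; positivity))
  have hexp := ((hasDerivAt_id r).const_mul 2).fun_inv (by simpa using hr.ne')
    |>.const_mul (-‖y‖ ^ 2) |>.exp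
  refine (hfactor.mul hexp).congr_deriv ?_
  simp only [id, heatKernelDt, rpow_sub_one (by positivity : 2 * π * r ≠ 0), ← div_eq_mul_inv]
  field_simp
  ring

theorem heatKernel_le_mul_heatKernel {a b ρ : ℝ} (ha : 0 < a) (haρ : a ≤ ρ) (hρb : ρ ≤ b)
    (y : EuclideanSpace ℝ (Fin n)) :
    heatKernel n ρ y ≤ (b / a) ^ ((n : ℝ) / 2) * heatKernel n b y := by
  have hb : 0 < b := ha.trans_le (haρ.trans hρb)
  have hfactor : (2 * π * ρ) ^ (-(n : ℝ) / 2) ≤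
      (b / a) ^ ((n : ℝ) / 2) * (2 * π * b) ^ (-(n : ℝ) / 2) := by
    calc (2 * π * ρ) ^ (-(n : ℝ) / 2) ≤ (2 * π * a) ^ (-(n : ℝ) / 2) :=
          rpow_le_rpow_of_nonpos (by positivity) (by gcongr)
            (div_nonpos_of_nonpos_of_nonneg (by simp) zero_le_two)
      _ = (b / a) ^ ((n : ℝ) / 2) * (2 * π * b) ^ (-(n : ℝ) / 2) := by
          rw [neg_div, rpow_neg (by positivity), rpow_neg (by positivity), ← div_eq_mul_inv,
            ← div_rpow (by positivity) (by positivity), ← inv_rpow (by positivity)]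
          congr 1
          field_simp
  have hexp : Real.exp (-‖y‖ ^ 2 / (2 * ρ)) ≤ Real.exp (-‖y‖ ^ 2 / (2 * b)) := by
    rw [neg_div, neg_div]
    gcongr
    exact mul_pos two_pos (ha.trans_le haρ)
  simp only [heatKernel, ← mul_assoc]
  gcongr

theorem abs_heatKernelDt_le (hr : 0 < r) (y : EuclideanSpace ℝ (Fin n)) :
    |heatKernelDt n r y| ≤ heatKernel n r y * (‖y‖ ^ 2 / (2 * r ^ 2) + n / (2 * r)) := by
  have hfactor : heatKernelDt n r y =
      heatKernel n r y * (‖y‖ ^ 2 / (2 * r ^ 2) - n / (2 * r)) := rfl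
  rw [hfactor, abs_mul, abs_of_nonneg (heatKernel_nonneg hr.le y)]
  refine mul_le_mul_of_nonneg_left ((abs_sub _ _).trans_eq ?_) (heatKernel_nonneg hr.le y)
  rw [abs_of_nonneg (by positivity), abs_of_nonneg (by positivity)]

end HeatKernel

section TimeDerivative

open Polynomial (C X)

variable {n : ℕ} {r : ℝ}

theorem abs_heatKernelDt_mul_le (hr : 0 < r) {F : EuclideanSpace ℝ (Fin n) → ℝ}
    {P : Polynomial ℝ} (hF : ∀ y, |F y| ≤ P.eval ‖y‖) {ρ : ℝ} (hρ : ρ ∈ Ioo (r / 2) (2 * r))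
    (y : EuclideanSpace ℝ (Fin n)) :
    |heatKernelDt n ρ y * F y| ≤ (2 * r / (r / 2)) ^ ((n : ℝ) / 2) * (heatKernel n (2 * r) y *
      ((C (2 / r ^ 2) * X ^ 2 + C (n / r)) * P).eval ‖y‖) := by
  have hρ0 : 0 < ρ := (half_pos hr).trans hρ.1
  have hpoly : ‖y‖ ^ 2 / (2 * ρ ^ 2) + n / (2 * ρ) ≤ 2 / r ^ 2 * ‖y‖ ^ 2 + n / r := by
    calc ‖y‖ ^ 2 / (2 * ρ ^ 2) + n / (2 * ρ)
        ≤ ‖y‖ ^ 2 / (2 * (r / 2) ^ 2) + n / (2 * (r / 2)) := by gcongr <;> exact hρ.1.le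
      _ = 2 / r ^ 2 * ‖y‖ ^ 2 + n / r := by field_simp
  have hdom : 0 ≤ (2 * r / (r / 2)) ^ ((n : ℝ) / 2) * heatKernel n (2 * r) y :=
    mul_nonneg (by positivity) (heatKernel_nonneg (by positivity) y)
  simp only [Polynomial.eval_mul, Polynomial.eval_add, Polynomial.eval_C, Polynomial.eval_pow,
    Polynomial.eval_X, abs_mul, ← mul_assoc]
  refine mul_le_mul ((abs_heatKernelDt_le hρ0 y).trans ?_) (hF y) (abs_nonneg _)
    (mul_nonneg hdom (add_nonneg (by positivity) (by positivity)))
  exact mul_le_mul (heatKernel_le_mul_heatKernel (half_pos hr) hρ.1.le hρ.2.le y) hpoly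
    (by positivity) hdom

theorem hasDerivAt_integral_heatKernel_mul (hr : 0 < r) {F : EuclideanSpace ℝ (Fin n) → ℝ}
    (hFm : Measurable F) {P : Polynomial ℝ} (hF : ∀ y, |F y| ≤ P.eval ‖y‖) :
    Integrable (fun y => heatKernelDt n r y * F y) ∧
      HasDerivAt (fun ρ => ∫ y, heatKernel n ρ y * F y) (∫ y, heatKernelDt n r y * F y) r := by
  have hmeas : ∀ ρ, AEStronglyMeasurable (fun y => heatKernel n ρ y * F y) volume := fun ρ =>
    (measurable_heatKernel.of_uncurry_left.mul hFm).aestronglyMeasurable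
  refine hasDerivAt_integral_of_dominated_loc_of_deriv_le
    (Ioo_mem_nhds (half_lt_self hr) (lt_two_mul_self hr)) (.of_forall hmeas)
    ((integrable_heatKernel_mul_eval_norm hr P).mono' (hmeas r) (ae_of_all _ fun y => ?_))
    (measurable_heatKernelDt.of_uncurry_left.mul hFm).aestronglyMeasurable
    (ae_of_all _ fun y ρ hρ => abs_heatKernelDt_mul_le hr hF hρ y)
    ((integrable_heatKernel_mul_eval_norm (by positivity) _).const_mul _)
    (ae_of_all _ fun y ρ hρ => (hasDerivAt_heatKernel ((half_pos hr).trans hρ.1) y).mul_const _)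
  rw [norm_mul, norm_of_nonneg (heatKernel_nonneg hr.le y)]
  exact mul_le_mul_of_nonneg_left (hF y) (heatKernel_nonneg hr.le y)

theorem hasDerivAt_integral_heatKernel (hr : 0 < r) :
    Integrable (heatKernelDt n r) ∧
      HasDerivAt (fun ρ => ∫ y, heatKernel n ρ y) (∫ y, heatKernelDt n r y) r := by
  simpa only [mul_one] using hasDerivAt_integral_heatKernel_mul (F := fun _ => 1) (P := C 1) hr
    measurable_const (by simp)

theorem integral_heatKernelDt (hr : 0 < r) : ∫ y, heatKernelDt n r y = 0 :=
  (hasDerivAt_integral_heatKernel hr).2.unique <| (hasDerivAt_const r 1).congr_of_eventuallyEq <|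
    (lt_mem_nhds hr).mono fun _ => integral_heatKernel

end TimeDerivative

section Lipschitz

open Polynomial (C X)

variable {n : ℕ} {φ : EuclideanSpace ℝ (Fin n) → ℝ} {L : NNReal} {r : ℝ}

theorem abs_sub_apply_le (hφ : LipschitzWith L φ) (η y : EuclideanSpace ℝ (Fin n)) :
    |φ (η - y) - φ η| ≤ L * ‖y‖ := by
  simpa [dist_eq_norm] using hφ.dist_le_mul (η - y) η

theorem abs_apply_sub_le (hφ : LipschitzWith L φ) (η y : EuclideanSpace ℝ (Fin n)) :
    |φ (η - y)| ≤ (C |φ η| + C (L : ℝ) * X).eval ‖y‖ := by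
  have htriangle : |φ (η - y)| ≤ |φ η| + |φ (η - y) - φ η| := by
    simpa using abs_add_le (φ η) (φ (η - y) - φ η)
  simpa using htriangle.trans (add_le_add_right (abs_sub_apply_le hφ η y) _)

theorem hasDerivAt_convol_heatKernel (hφ : LipschitzWith L φ) (hr : 0 < r)
    (η : EuclideanSpace ℝ (Fin n)) :
    HasDerivAt (fun ρ => convol (heatKernel n ρ) φ η) (convol (heatKernelDt n r) φ η) r :=
  (hasDerivAt_integral_heatKernel_mul hr (hφ.continuous.comp (by fun_prop)).measurable
    (abs_apply_sub_le hφ η)).2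

theorem abs_convol_sub_integral_mul_le {k : EuclideanSpace ℝ (Fin n) → ℝ} (hφ : LipschitzWith L φ)
    (hk : Integrable k) (hk1 : Integrable fun y => k y * ‖y‖) (η : EuclideanSpace ℝ (Fin n)) :
    |convol k φ η - (∫ y, k y) * φ η| ≤ L * ∫ y, |k y| * ‖y‖ := by
  have hbound : ∀ y, ‖k y * (φ (η - y) - φ η)‖ ≤ L * (|k y| * ‖y‖) := fun y => by
    rw [norm_mul, norm_eq_abs, norm_eq_abs, mul_left_comm]
    exact mul_le_mul_of_nonneg_left (abs_sub_apply_le hφ η y) (abs_nonneg _)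
  have hk1_abs : Integrable fun y => L * (|k y| * ‖y‖) := by
    simpa only [norm_mul, norm_norm, norm_eq_abs (k _)] using hk1.norm.const_mul (L : ℝ)
  have hdiff : Integrable fun y => k y * (φ (η - y) - φ η) :=
    hk1_abs.mono' (hk.1.mul ((hφ.continuous.comp (continuous_sub_left η)).sub
      continuous_const).aestronglyMeasurable) (ae_of_all _ hbound)
  have hsplit : convol k φ η - (∫ y, k y) * φ η = ∫ y, k y * (φ (η - y) - φ η) := by
    rw [convol, ← integral_mul_const, sub_eq_iff_eq_add, ← integral_add hdiff (hk.mul_const _)]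
    simp only [mul_sub, sub_add_cancel]
  rw [hsplit, ← integral_const_mul]
  exact norm_integral_le_of_norm_le hk1_abs (ae_of_all _ hbound)

theorem abs_convol_heatKernel_sub_le (hφ : LipschitzWith L φ) (hr : 0 < r)
    (η : EuclideanSpace ℝ (Fin n)) :
    |convol (heatKernel n r) φ η - φ η| ≤ L * heatMoment n 1 * √r := by
  have h := abs_convol_sub_integral_mul_le hφ (integrable_heatKernel hr)
    (by simpa only [pow_one] using integrable_heatKernel_mul_norm_pow hr 1) η
  have hmoment := integral_heatKernel_mul_norm_pow (n := n) hr 1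
  simp only [pow_one] at hmoment
  simpa only [integral_heatKernel hr, one_mul, abs_of_nonneg (heatKernel_nonneg hr.le _), hmoment,
    mul_comm (√r), ← mul_assoc] using h

/-- A bound for the first absolute moment of `∂g_1`, read off from
`|∂g_1(y)| ≤ g_1(y) (|y|² + n) / 2`. -/
noncomputable def heatDtMomentBound (n : ℕ) : ℝ :=
  (heatMoment n 3 + n * heatMoment n 1) / 2

theorem integral_abs_heatKernelDt_mul_norm_le (hr : 0 < r) :
    ∫ y, |heatKernelDt n r y| * ‖y‖ ≤
      heatDtMomentBound n * r ^ (-(1 / 2) : ℝ) := by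
  have h1 := (integrable_heatKernel_mul_norm_pow (n := n) hr 1).const_mul (n / (2 * r))
  have h3 := (integrable_heatKernel_mul_norm_pow (n := n) hr 3).const_mul (2 * r ^ 2)⁻¹
  have : 0 < √r := sqrt_pos.2 hr
  calc ∫ y, |heatKernelDt n r y| * ‖y‖
      ≤ ∫ y, ((2 * r ^ 2)⁻¹ * (heatKernel n r y * ‖y‖ ^ 3) +
          n / (2 * r) * (heatKernel n r y * ‖y‖ ^ 1)) := by
        refine integral_mono_of_nonneg (ae_of_all _ fun y => by positivity) (h3.add h1)
          (ae_of_all _ fun y => ?_)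
        refine (mul_le_mul_of_nonneg_right (abs_heatKernelDt_le hr y)
          (norm_nonneg y)).trans_eq ?_
        ring
    _ = (2 * r ^ 2)⁻¹ * (√r ^ 3 * heatMoment n 3) + n / (2 * r) * (√r ^ 1 * heatMoment n 1) := by
        rw [integral_add h3 h1, integral_const_mul, integral_const_mul,
          integral_heatKernel_mul_norm_pow hr, integral_heatKernel_mul_norm_pow hr]
    _ = heatDtMomentBound n * r ^ (-(1 / 2) : ℝ) := by
        rw [heatDtMomentBound, rpow_neg hr.le, ← sqrt_eq_rpow]
        nth_rw 1 3 [← sq_sqrt hr.le]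
        field_simp

theorem abs_convol_heatKernelDt_le (hφ : LipschitzWith L φ) (hr : 0 < r)
    (η : EuclideanSpace ℝ (Fin n)) :
    |convol (heatKernelDt n r) φ η| ≤
      L * heatDtMomentBound n * r ^ (-(1 / 2) : ℝ) := by
  have h := abs_convol_sub_integral_mul_le hφ (hasDerivAt_integral_heatKernel hr).1
    (hasDerivAt_integral_heatKernel_mul (P := X) hr measurable_norm (by simp)).1 η
  rw [integral_heatKernelDt hr, zero_mul, sub_zero] at h
  refine h.trans ?_
  rw [mul_assoc]
  gcongr
  exact integral_abs_heatKernelDt_mul_norm_le hr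

end Lipschitz

section Convolution

variable {n : ℕ} {p : ℝ≥0∞} {k h : EuclideanSpace ℝ (Fin n) → ℝ} {r : ℝ}

theorem measurable_uncurry_convol {α : Type*} [MeasurableSpace α]
    {K F : α → EuclideanSpace ℝ (Fin n) → ℝ} (hK : Measurable (Function.uncurry K))
    (hF : Measurable (Function.uncurry F)) :
    Measurable (Function.uncurry fun a => convol (K a) (F a)) := by
  have hkernel : Measurable fun q : (α × EuclideanSpace ℝ (Fin n)) × EuclideanSpace ℝ (Fin n) =>
      Function.uncurry K (q.1.1, q.2) := hK.comp (by fun_prop)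
  have hshift : Measurable fun q : (α × EuclideanSpace ℝ (Fin n)) × EuclideanSpace ℝ (Fin n) =>
      Function.uncurry F (q.1.1, q.1.2 - q.2) := hF.comp (by fun_prop)
  exact (hkernel.mul hshift).stronglyMeasurable.integral_prod_right.measurable

theorem measurable_convol (hk : Measurable k) (hh : Measurable h) : Measurable (convol k h) :=
  (measurable_uncurry_convol (K := fun _ : Unit => k) (F := fun _ => h) (hk.comp measurable_snd)
    (hh.comp measurable_snd)).of_uncurry_left (x := ())

theorem measurable_uncurry_convol_heatKernel {α : Type*} [MeasurableSpace α] {τ : α → ℝ}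
    {F : α → EuclideanSpace ℝ (Fin n) → ℝ} (hτ : Measurable τ)
    (hF : Measurable (Function.uncurry F)) :
    Measurable (Function.uncurry fun a => convol (heatKernel n (τ a)) (F a)) :=
  measurable_uncurry_convol
    (measurable_heatKernel.comp ((hτ.comp measurable_fst).prodMk measurable_snd)) hF

theorem measurable_uncurry_convol_heatKernelDt {α : Type*} [MeasurableSpace α] {τ : α → ℝ}
    (hτ : Measurable τ) (hh : Measurable h) :
    Measurable (Function.uncurry fun a => convol (heatKernelDt n (τ a)) h) :=
  measurable_uncurry_convol
    (measurable_heatKernelDt.comp ((hτ.comp measurable_fst).prodMk measurable_snd))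
    (hh.comp measurable_snd)

theorem eLpNorm_convol_le (hk : Integrable k) (hh : Measurable h) (hp : 1 ≤ p) :
    eLpNorm (convol k h) p volume ≤ (∫⁻ y, ‖k y‖ₑ) * eLpNorm h p volume :=
  eLpNorm_integral_mul_le hk (F := fun y ξ => h (ξ - y)) (hh.comp (by fun_prop)) hp
    (ae_of_all _ fun y => (eLpNorm_comp_measurePreserving hh.aestronglyMeasurable
      (measurePreserving_sub_right volume y)).le)

theorem eLpNorm_convol_heatKernel_le (hr : 0 < r) (hh : Measurable h) (hp : 1 ≤ p) :
    eLpNorm (convol (heatKernel n r) h) p volume ≤ eLpNorm h p volume := by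
  have hmass : ∫⁻ y, ‖heatKernel n r y‖ₑ = 1 := by
    rw [← ofReal_integral_norm_eq_lintegral_enorm (integrable_heatKernel hr)]
    simp only [norm_of_nonneg (heatKernel_nonneg hr.le _), integral_heatKernel hr,
      ENNReal.ofReal_one]
  simpa only [hmass, one_mul] using eLpNorm_convol_le (integrable_heatKernel hr) hh hp

theorem abs_convol_heatKernel_le (hr : 0 < r) {B : ℝ} (hB : ∀ y, |h y| ≤ B)
    (ξ : EuclideanSpace ℝ (Fin n)) : |convol (heatKernel n r) h ξ| ≤ B := by
  refine (norm_integral_le_of_norm_le (f := fun y => heatKernel n r y * h (ξ - y))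
    ((integrable_heatKernel hr).mul_const B) (ae_of_all _ fun y => ?_)).trans_eq ?_
  · rw [norm_mul, norm_of_nonneg (heatKernel_nonneg hr.le y)]
    exact mul_le_mul_of_nonneg_left (hB _) (heatKernel_nonneg hr.le y)
  · rw [integral_mul_const, integral_heatKernel hr, one_mul]

theorem convol_intervalIntegral {a b : ℝ} {F : ℝ → EuclideanSpace ℝ (Fin n) → ℝ}
    (hk : Integrable k) (hF : Measurable (Function.uncurry F)) {c : ℝ → ℝ}
    (hc : IntervalIntegrable c volume a b) (hFc : ∀ u ∈ uIoc a b, ∀ η, |F u η| ≤ c u)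
    (ξ : EuclideanSpace ℝ (Fin n)) :
    convol k (fun η => ∫ u in a..b, F u η) ξ = ∫ u in a..b, convol k (F u) ξ := by
  have hmeas : Measurable fun q : ℝ × EuclideanSpace ℝ (Fin n) =>
      Function.uncurry F (q.1, ξ - q.2) := hF.comp (by fun_prop)
  have hint : Integrable (Function.uncurry fun u y => k y * F u (ξ - y))
      ((volume.restrict (uIoc a b)).prod volume) := by
    refine (hc.def'.mul_prod hk.norm).mono' (hk.1.comp_snd.mul hmeas.aestronglyMeasurable) ?_
    filter_upwards [Measure.quasiMeasurePreserving_fst.ae (ae_restrict_mem measurableSet_uIoc)]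
      with q hq
    rw [Function.uncurry, norm_mul, mul_comm]
    exact mul_le_mul_of_nonneg_right (hFc q.1 hq _) (norm_nonneg _)
  simp only [convol, ← intervalIntegral.integral_const_mul]
  exact (intervalIntegral_integral_swap hint).symm

end Convolution

section FundamentalTheorem

variable {n : ℕ} {φ : EuclideanSpace ℝ (Fin n) → ℝ} {L : NNReal} {s t : ℝ}

theorem intervalIntegrable_rpow_neg_half_sub (s t : ℝ) :
    IntervalIntegrable (fun u => (u - s) ^ (-(1 / 2) : ℝ)) volume s t := by
  simpa only [sub_add_cancel, zero_add] using
    (intervalIntegral.intervalIntegrable_rpow' (a := 0) (b := t - s)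
      (by norm_num : (-1 : ℝ) < -(1 / 2))).comp_sub_right s

theorem integral_convol_heatKernelDt (hφ : LipschitzWith L φ) (hst : s < t)
    (η : EuclideanSpace ℝ (Fin n)) :
    ∫ u in s..t, convol (heatKernelDt n (u - s)) φ η = convol (heatKernel n (t - s)) φ η - φ η := by
  have hderiv : ∀ u ∈ Ioo s t, HasDerivAt (fun u => convol (heatKernel n (u - s)) φ η)
      (convol (heatKernelDt n (u - s)) φ η) u := fun u hu =>
    (hasDerivAt_convol_heatKernel hφ (sub_pos.2 hu.1) η).comp_sub_const u s
  have hint : IntervalIntegrable (fun u => convol (heatKernelDt n (u - s)) φ η) volume s t := by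
    refine ((intervalIntegrable_rpow_neg_half_sub s t).const_mul
      (L * heatDtMomentBound n)).mono_fun'
        (measurable_uncurry_convol_heatKernelDt (measurable_id.sub_const s)
          hφ.continuous.measurable).of_uncurry_right.aestronglyMeasurable ?_
    rw [uIoc_of_le hst.le]
    exact ae_restrict_of_forall_mem measurableSet_Ioc fun u hu =>
      abs_convol_heatKernelDt_le hφ (sub_pos.2 hu.1) η
  have hleft : Tendsto (fun u => convol (heatKernel n (u - s)) φ η) (𝓝[>] s) (𝓝 (φ η)) := by
    have hsqrt : Tendsto (fun u => L * heatMoment n 1 * √(u - s)) (𝓝[>] s) (𝓝 0) := by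
      have hcont : Continuous fun u => L * heatMoment n 1 * √(u - s) := by fun_prop
      simpa using (hcont.tendsto s).mono_left nhdsWithin_le_nhds
    exact tendsto_iff_norm_sub_tendsto_zero.2 <| squeeze_zero' (.of_forall fun _ => norm_nonneg _)
      (eventually_nhdsWithin_of_forall fun u hu =>
        abs_convol_heatKernel_sub_le hφ (sub_pos.2 hu) η) hsqrt
  exact intervalIntegral.integral_eq_sub_of_hasDerivAt_of_tendsto hst hderiv hint hleft
    ((hasDerivAt_convol_heatKernel hφ (sub_pos.2 hst) η).comp_sub_const t
      s).continuousAt.continuousWithinAt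

end FundamentalTheorem

section WeightedHeatIntegral

variable {n : ℕ} {p : ℝ≥0∞} {f : ℝ → ℝ} {s t : ℝ}

/-- The operator `X^x_{tu} χ = ∫_u^t x'(v) (g_{t-v} * χ) dv`, with `f` in the role of `x'`. The
kernel `g_0` at the endpoint `v = t` is `heatKernel n 0` rather than a Dirac mass, which does not
affect the integral. -/
noncomputable def weightedHeatIntegral (f : ℝ → ℝ) (t u : ℝ) (χ : EuclideanSpace ℝ (Fin n) → ℝ) :
    EuclideanSpace ℝ (Fin n) → ℝ :=
  fun ξ => ∫ v in u..t, f v * convol (heatKernel n (t - v)) χ ξ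

theorem ae_restrict_Ioc_lt (s t : ℝ) : ∀ᵐ u ∂volume.restrict (Ioc s t), u < t := by
  rw [← restrict_Ioo_eq_restrict_Ioc]
  exact ae_restrict_of_forall_mem measurableSet_Ioo fun u hu => hu.2

theorem eLpNorm_weightedHeatIntegral_le (hst : s ≤ t) (hf : IntegrableOn f (Ioc s t))
    {χ : EuclideanSpace ℝ (Fin n) → ℝ} (hχ : Measurable χ) (hp : 1 ≤ p) :
    eLpNorm (weightedHeatIntegral f t s χ) p volume ≤
      (∫⁻ v in Ioc s t, ‖f v‖ₑ) * eLpNorm χ p volume := by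
  unfold weightedHeatIntegral
  simp only [intervalIntegral.integral_of_le hst]
  have hmeas : Measurable (Function.uncurry fun v => convol (heatKernel n (t - v)) χ) :=
    measurable_uncurry_convol_heatKernel (measurable_const.sub measurable_id)
      (hχ.comp measurable_snd)
  exact eLpNorm_integral_mul_le hf hmeas hp <| (ae_restrict_Ioc_lt s t).mono fun v hv =>
    eLpNorm_convol_heatKernel_le (sub_pos.2 hv) hχ hp

theorem integral_mul_convol_heatKernel_integral (hst : s ≤ t)
    (hf : IntervalIntegrable f volume s t) {H : ℝ → EuclideanSpace ℝ (Fin n) → ℝ}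
    (hH : Measurable (Function.uncurry H)) {c : ℝ → ℝ} (hc : IntervalIntegrable c volume s t)
    (hHc : ∀ u ∈ Ioc s t, ∀ η, |H u η| ≤ c u) (ξ : EuclideanSpace ℝ (Fin n)) :
    ∫ v in s..t, f v * convol (heatKernel n (t - v)) (fun η => ∫ u in s..v, H u η) ξ =
      ∫ u in s..t, weightedHeatIntegral f t u (H u) ξ := by
  have hswap : ∀ v ∈ Ioo s t,
      f v * convol (heatKernel n (t - v)) (fun η => ∫ u in s..v, H u η) ξ =
        ∫ u in s..v, f v * convol (heatKernel n (t - v)) (H u) ξ := fun v hv => by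
    have hsub : uIcc s v ⊆ uIcc s t := uIcc_subset_uIcc_left (mem_uIcc_of_le hv.1.le hv.2.le)
    rw [intervalIntegral.integral_const_mul, convol_intervalIntegral
      (integrable_heatKernel (sub_pos.2 hv.2)) hH (hc.mono_set hsub) _ ξ]
    rw [uIoc_of_le hv.1.le]
    exact fun u hu => hHc u ⟨hu.1, hu.2.trans hv.2.le⟩
  have hint : Integrable
      (Function.uncurry fun v u => f v * convol (heatKernel n (t - v)) (H u) ξ)
      ((volume.restrict (Ioc s t)).prod (volume.restrict (Ioc s t))) := by
    have hmeas : Measurable (Function.uncurry fun q : ℝ × ℝ =>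
        convol (heatKernel n (t - q.1)) (H q.2)) :=
      measurable_uncurry_convol_heatKernel (measurable_const.sub measurable_fst)
        (hH.comp ((measurable_snd.comp measurable_fst).prodMk measurable_snd))
    refine (hf.1.norm.mul_prod hc.1).mono'
      (hf.1.1.comp_fst.mul hmeas.of_uncurry_right.aestronglyMeasurable) ?_
    filter_upwards [Measure.quasiMeasurePreserving_fst.ae (ae_restrict_Ioc_lt s t),
      Measure.quasiMeasurePreserving_snd.ae (ae_restrict_mem measurableSet_Ioc)] with q hv hu
    rw [Function.uncurry, norm_mul]
    exact mul_le_mul_of_nonneg_left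
      (abs_convol_heatKernel_le (sub_pos.2 hv) (hHc q.2 hu) ξ) (norm_nonneg _)
  rw [intervalIntegral.integral_congr_Ioo_of_le hst hswap]
  exact intervalIntegral_triangle_swap hst hint

end WeightedHeatIntegral

section MixedOperator

variable {n : ℕ} {p : ℝ≥0∞} {f : ℝ → ℝ} {s t : ℝ} {φ ψ : EuclideanSpace ℝ (Fin n) → ℝ} {L : NNReal}

theorem lintegral_eLpNorm_heatKernel_sub_mul_lt_top (hp : 1 ≤ p) (hf : IntegrableOn f (Ioc s t))
    (hφ : LipschitzWith L φ) (hψm : Measurable ψ) (hψ : MemLp ψ p) :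
    ∫⁻ u in Ioc s t, eLpNorm (fun ξ => f u * convol (heatKernel n (t - u))
      (fun η => (convol (heatKernel n (u - s)) φ η - φ η) * ψ η) ξ) p volume < ⊤ := by
  let G (u : ℝ) (η : EuclideanSpace ℝ (Fin n)) : ℝ :=
    (convol (heatKernel n (u - s)) φ η - φ η) * ψ η
  have hG : ∀ u, Measurable (G u) := fun u =>
    ((measurable_convol measurable_heatKernel.of_uncurry_left hφ.continuous.measurable).sub
      hφ.continuous.measurable).mul hψm
  have hbound : ∀ u ∈ Ioc s t, ∀ η,
      |f u * G u η| ≤ |f u| * (L * heatMoment n 1 * √(t - s)) * |ψ η| := fun u hu η => by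
    have hsub : |convol (heatKernel n (u - s)) φ η - φ η| ≤ L * heatMoment n 1 * √(t - s) :=
      (abs_convol_heatKernel_sub_le hφ (sub_pos.2 hu.1) η).trans <|
        mul_le_mul_of_nonneg_left (sqrt_le_sqrt (sub_le_sub_right hu.2 s))
          (mul_nonneg L.2 (heatMoment_nonneg n 1))
    rw [abs_mul, abs_mul, mul_assoc]
    gcongr
  have hcontract : ∀ᵐ u ∂volume.restrict (Ioc s t),
      eLpNorm (fun ξ => f u * convol (heatKernel n (t - u)) (G u) ξ) p volume ≤
        eLpNorm (fun η => f u * G u η) p volume := (ae_restrict_Ioc_lt s t).mono fun u hu => by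
    change eLpNorm (f u • convol (heatKernel n (t - u)) (G u)) p volume ≤
      eLpNorm (f u • G u) p volume
    rw [eLpNorm_const_smul, eLpNorm_const_smul]
    gcongr
    exact eLpNorm_convol_heatKernel_le (sub_pos.2 hu) (hG u) hp
  exact (lintegral_mono_ae hcontract).trans_lt <| lintegral_eLpNorm_lt_top_of_abs_le
    (hf.abs.mul_const _) hψ (ae_restrict_of_forall_mem measurableSet_Ioc hbound)

theorem abs_convol_heatKernelDt_mul_le (hφ : LipschitzWith L φ) {u : ℝ} (hu : s < u)
    (η : EuclideanSpace ℝ (Fin n)) :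
    |convol (heatKernelDt n (u - s)) φ η * ψ η| ≤
      L * heatDtMomentBound n * (u - s) ^ (-(1 / 2) : ℝ) * |ψ η| := by
  rw [abs_mul]
  gcongr
  exact abs_convol_heatKernelDt_le hφ (sub_pos.2 hu) η

theorem lintegral_eLpNorm_weightedHeatIntegral_lt_top (hp : 1 ≤ p)
    (hf : IntegrableOn f (Ioc s t)) (hφ : LipschitzWith L φ) (hψm : Measurable ψ)
    (hψ : MemLp ψ p) :
    ∫⁻ u in Ioc s t, eLpNorm (weightedHeatIntegral f t u
      (fun η => convol (heatKernelDt n (u - s)) φ η * ψ η)) p volume < ⊤ := by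
  let H (u : ℝ) (η : EuclideanSpace ℝ (Fin n)) : ℝ := convol (heatKernelDt n (u - s)) φ η * ψ η
  have hH : ∀ u, Measurable (H u) := fun u =>
    (measurable_convol measurable_heatKernelDt.of_uncurry_left hφ.continuous.measurable).mul hψm
  have hcontract : ∀ u ∈ Ioc s t, eLpNorm (weightedHeatIntegral f t u (H u)) p volume ≤
      (∫⁻ v in Ioc s t, ‖f v‖ₑ) * eLpNorm (H u) p volume := fun u hu => by
    have hsub : Ioc u t ⊆ Ioc s t := Ioc_subset_Ioc_left hu.1.le
    refine (eLpNorm_weightedHeatIntegral_le hu.2 (hf.mono_set hsub) (hH u) hp).trans ?_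
    gcongr
  have hc := (intervalIntegrable_rpow_neg_half_sub s t).1.const_mul (L * heatDtMomentBound n)
  calc ∫⁻ u in Ioc s t, eLpNorm (weightedHeatIntegral f t u (H u)) p volume
      ≤ ∫⁻ u in Ioc s t, (∫⁻ v in Ioc s t, ‖f v‖ₑ) * eLpNorm (H u) p volume :=
        setLIntegral_mono' measurableSet_Ioc hcontract
    _ = (∫⁻ v in Ioc s t, ‖f v‖ₑ) * ∫⁻ u in Ioc s t, eLpNorm (H u) p volume :=
        lintegral_const_mul' _ _ hf.2.ne
    _ < ⊤ := ENNReal.mul_lt_top hf.2 <| lintegral_eLpNorm_lt_top_of_abs_le hc hψ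
        (ae_restrict_of_forall_mem measurableSet_Ioc fun u hu =>
          abs_convol_heatKernelDt_mul_le hφ hu.1)

theorem integral_heatKernel_sub_mul_eq (hst : s ≤ t) (hf : IntervalIntegrable f volume s t)
    (hφ : LipschitzWith L φ) (hψm : Measurable ψ) {B : ℝ} (hB : ∀ η, |ψ η| ≤ B)
    (ξ : EuclideanSpace ℝ (Fin n)) :
    ∫ u in s..t, f u * convol (heatKernel n (t - u))
        (fun η => (convol (heatKernel n (u - s)) φ η - φ η) * ψ η) ξ =
      ∫ u in s..t, weightedHeatIntegral f t u
        (fun η => convol (heatKernelDt n (u - s)) φ η * ψ η) ξ := by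
  have hftc : ∀ v ∈ Ioo s t, f v * convol (heatKernel n (t - v))
      (fun η => (convol (heatKernel n (v - s)) φ η - φ η) * ψ η) ξ = f v * convol
      (heatKernel n (t - v)) (fun η => ∫ u in s..v, convol (heatKernelDt n (u - s)) φ η * ψ η) ξ :=
    fun v hv => by
      simp only [intervalIntegral.integral_mul_const, integral_convol_heatKernelDt hφ hv.1]
  have hbound : ∀ u ∈ Ioc s t, ∀ η, |convol (heatKernelDt n (u - s)) φ η * ψ η| ≤
      L * heatDtMomentBound n * (u - s) ^ (-(1 / 2) : ℝ) * B :=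
    fun u hu η => by
      rw [abs_mul]
      exact mul_le_mul (abs_convol_heatKernelDt_le hφ (sub_pos.2 hu.1) η) (hB η) (abs_nonneg _)
        ((abs_nonneg _).trans (abs_convol_heatKernelDt_le hφ (sub_pos.2 hu.1) η))
  rw [intervalIntegral.integral_congr_Ioo_of_le hst hftc]
  exact integral_mul_convol_heatKernel_integral hst hf
    ((measurable_uncurry_convol_heatKernelDt (measurable_id.sub_const s)
      hφ.continuous.measurable).mul (hψm.comp measurable_snd))
    (((intervalIntegrable_rpow_neg_half_sub s t).const_mul _).mul_const B) hbound ξ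

theorem integration_by_parts_mixed_operator_general (hp : 1 ≤ p) (hst : s ≤ t)
    (hf : IntervalIntegrable f volume s t) (hφ : LipschitzWith L φ) (hψm : Measurable ψ) {B : ℝ}
    (hB : ∀ η, |ψ η| ≤ B) (hψ : MemLp ψ p) :
    ∫⁻ u in Ioc s t, eLpNorm (fun ξ => f u * convol (heatKernel n (t - u))
      (fun η => (convol (heatKernel n (u - s)) φ η - φ η) * ψ η) ξ) p volume < ⊤ ∧
    ∫⁻ u in Ioc s t, eLpNorm (fun ξ => ∫ v in u..t, f v * convol (heatKernel n (t - v))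
      (fun η => convol (heatKernelDt n (u - s)) φ η * ψ η) ξ) p volume < ⊤ ∧
    ∀ ξ, ∫ u in s..t, f u * convol (heatKernel n (t - u))
        (fun η => (convol (heatKernel n (u - s)) φ η - φ η) * ψ η) ξ =
      ∫ u in s..t, ∫ v in u..t, f v * convol (heatKernel n (t - v))
        (fun η => convol (heatKernelDt n (u - s)) φ η * ψ η) ξ :=
  ⟨lintegral_eLpNorm_heatKernel_sub_mul_lt_top hp hf.1 hφ hψm hψ,
    lintegral_eLpNorm_weightedHeatIntegral_lt_top hp hf.1 hφ hψm hψ,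
    integral_heatKernel_sub_mul_eq hst hf hφ hψm hB⟩

end MixedOperator

theorem exists_lipschitzWith_schwartzMap {E F : Type*} [NormedAddCommGroup E] [NormedSpace ℝ E]
    [NormedAddCommGroup F] [NormedSpace ℝ F] (φ : SchwartzMap E F) : ∃ L, LipschitzWith L φ := by
  obtain ⟨C, hC, hdecay⟩ := φ.decay 0 1
  refine ⟨C.toNNReal, lipschitzWith_of_nnnorm_fderiv_le φ.differentiable fun x => ?_⟩
  rw [← NNReal.coe_le_coe, coe_toNNReal C hC.le]
  simpa only [pow_zero, one_mul, norm_iteratedFDeriv_one, coe_nnnorm] using hdecay x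

/-- integration by parts for the mixed operator `X^{xa}`.
For `x : [0,T] → ℝ` continuously differentiable and Schwartz functions `φ, ψ`,
writing `X^x_{tu} χ = ∫_u^t x'(v)(g_{t-v} * χ) dv` (with `g_0 * χ = χ`), one has,
in `L^p(ℝ^n)`,
`∫_s^t x'(u) (g_{t-u} * [((g_{u-s} * φ) - φ) · ψ]) du
  = ∫_s^t X^x_{tu}((∂g_{u-s} * φ) · ψ) du`,
with pointwise products `·` on ℝ^n, all integrals being absolutely convergent
Bochner integrals in `L^p(ℝ^n)`. -/
theorem integration_by_parts_mixed_operator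
    (n : ℕ) (hn : 1 ≤ n) (p : ℝ) (hp : 1 ≤ p) (T : ℝ) (hT : 0 < T)
    (x : ℝ → ℝ) (hx : ContDiff ℝ 1 x)
    (φ ψ : SchwartzMap (EuclideanSpace ℝ (Fin n)) ℝ)
    (s t : ℝ) (hs : 0 ≤ s) (hst : s ≤ t) (ht : t ≤ T) :
    ((∫⁻ u in Set.Ioc s t,
        eLpNorm (fun ξ => deriv x u * convol (heatKernel n (t - u))
            (fun η => (convol (heatKernel n (u - s)) (⇑φ) η - φ η) * ψ η) ξ)
          (ENNReal.ofReal p) volume) < ⊤) ∧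
    ((∫⁻ u in Set.Ioc s t,
        eLpNorm (fun ξ => ∫ v in u..t, deriv x v * convol (heatKernel n (t - v))
            (fun η => convol (heatKernelDt n (u - s)) (⇑φ) η * ψ η) ξ)
          (ENNReal.ofReal p) volume) < ⊤) ∧
    (∀ ξ, (∫ u in s..t, deriv x u * convol (heatKernel n (t - u))
            (fun η => (convol (heatKernel n (u - s)) (⇑φ) η - φ η) * ψ η) ξ)
        = ∫ u in s..t, (∫ v in u..t, deriv x v * convol (heatKernel n (t - v))
            (fun η => convol (heatKernelDt n (u - s)) (⇑φ) η * ψ η) ξ)) := by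
  have hf : IntervalIntegrable (deriv x) volume s t :=
    (hx.continuous_deriv le_rfl).intervalIntegrable s t
  obtain ⟨L, hφ⟩ := exists_lipschitzWith_schwartzMap φ
  obtain ⟨B, -, hB⟩ := ψ.decay 0 0
  exact integration_by_parts_mixed_operator_general (ENNReal.one_le_ofReal.2 hp) hst hf hφ
    ψ.continuous.measurable (by simpa using hB) (ψ.memLp _)
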